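/- If ∇ is a flat ℝ-linear connection of L on E, then for every p ≥ 1 the Chern–Simons form cs_p(∇, ∇^h) is closed: d_ρ(cs_p(∇, ∇^h)) = 0. (Its cohomology class u_{2p−1} = [cs_p(∇,∇^h)] is the secondary characteristic class of ∇.) -/

import Mathlib

open Module

/-- The trace over `C` of an `ℝ`-linear endomorphism of `E` whose underlying
function happens to be `C`-linear (and `0` otherwise). -/
noncomputable def trR (C : Type*) {E : Type*} [CommRing C] [AddCommGroup E]
    [Module ℝ E] [Module C E] (e : E →ₗ[ℝ] E) : C :=
  letI := Classical.propDecidable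
  if h : ∃ g : E →ₗ[C] E, ⇑g = ⇑e then LinearMap.trace C E h.choose else 0

/-- An ℝ-linear connection of the Lie algebra `L` (with anchor `ρ`) on the `C`-module `E`. -/
def IsConn {L C E : Type*} [LieRing L] [LieAlgebra ℝ L] [CommRing C] [Algebra ℝ C]
    [AddCommGroup E] [Module ℝ E] [Module C E]
    (ρ : L →ₗ[ℝ] Derivation ℝ C C) (D : L →ₗ[ℝ] Module.End ℝ E) : Prop :=
  ∀ (a : L) (f : C) (e : E), D a (f • e) = f • D a e + ρ a f • e

/-- The curvature of an ℝ-linear map `D : L →ₗ[ℝ] End ℝ E`. -/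
def curv {L E : Type*} [LieRing L] [LieAlgebra ℝ L] [AddCommGroup E] [Module ℝ E]
    (D : L →ₗ[ℝ] Module.End ℝ E) (a b : L) : Module.End ℝ E :=
  D a * D b - D b * D a - D ⁅a, b⁆

/-- The curvature as an `End ℝ E`-valued 2-form. -/
def curv2 {L E : Type*} [LieRing L] [LieAlgebra ℝ L] [AddCommGroup E] [Module ℝ E]
    (D : L →ₗ[ℝ] Module.End ℝ E) : (Fin 2 → L) → Module.End ℝ E :=
  fun a => curv D (a 0) (a 1)

/-- The Chevalley–Eilenberg style differential of a `V`-valued `n`-form on `L`,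
with respect to an action `act` of `L` on `V`:
`(dω)(a₁,…,a_{n+1}) = Σᵢ (−1)^{i+1} act(aᵢ)(ω(a₁,…,âᵢ,…)) +
  Σ_{i<j} (−1)^{i+j} ω(⁅aᵢ,aⱼ⁆, a₁,…,âᵢ,…,âⱼ,…)`. -/
def dGen {L V : Type*} [LieRing L] [AddCommGroup V] (act : L → V → V) :
    {n : ℕ} → ((Fin n → L) → V) → ((Fin (n + 1) → L) → V)
  | 0, ω, a => act (a 0) (ω Fin.elim0)
  | (m + 1), ω, a =>
      (∑ i : Fin (m + 2), (-1 : ℤ) ^ (i : ℕ) • act (a i) (ω (fun k => a (i.succAbove k)))) +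
      ∑ i : Fin (m + 2), ∑ j : Fin (m + 2),
        if h : (i : ℕ) < (j : ℕ) then
          (-1 : ℤ) ^ ((i : ℕ) + (j : ℕ)) • ω (Fin.cons ⁅a i, a j⁆
            (fun k : Fin m => a (j.succAbove
              ((⟨(i : ℕ), by have := j.isLt; omega⟩ : Fin (m + 1)).succAbove k))))
        else 0

/-- The differential `d_ρ` on `C`-valued ℝ-linear forms on `L`. -/
def dRho {L C : Type*} [LieRing L] [LieAlgebra ℝ L] [CommRing C] [Algebra ℝ C]
    (ρ : L →ₗ[ℝ] Derivation ℝ C C) {n : ℕ} (ω : (Fin n → L) → C) :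
    (Fin (n + 1) → L) → C :=
  dGen (fun a c => ρ a c) ω

/-- The differential `d^{∇̄}` on `End ℝ E`-valued ℝ-linear forms on `L`,
where `∇̄_a = [∇_a, ·]`. -/
def dEnd {L E : Type*} [LieRing L] [LieAlgebra ℝ L] [AddCommGroup E] [Module ℝ E]
    (D : L →ₗ[ℝ] Module.End ℝ E) {n : ℕ} (ω : (Fin n → L) → Module.End ℝ E) :
    (Fin (n + 1) → L) → Module.End ℝ E :=
  dGen (fun a φ => D a * φ - φ * D a) ω

/-- The wedge product (with composition as multiplication of values) of
`End ℝ E`-valued forms: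
`(ω∧η)(a₁,…,a_{m+n}) = (1/(m!·n!)) Σ_{τ} sgn τ · ω(a_{τ(1)},…) ∘ η(a_{τ(m+1)},…)`. -/
noncomputable def wedge {L E : Type*} [AddCommGroup E] [Module ℝ E] {m n : ℕ}
    (ω : (Fin m → L) → Module.End ℝ E) (η : (Fin n → L) → Module.End ℝ E) :
    (Fin (m + n) → L) → Module.End ℝ E :=
  fun a => ((m.factorial * n.factorial : ℝ))⁻¹ •
    ∑ τ : Equiv.Perm (Fin (m + n)), ((Equiv.Perm.sign τ : ℤ) •
      (ω (fun i => a (τ (Fin.castAdd n i))) * η (fun j => a (τ (Fin.natAdd m j)))))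

/-- The `p`-th wedge power of an `End ℝ E`-valued 2-form. -/
noncomputable def wpow {L E : Type*} [AddCommGroup E] [Module ℝ E]
    (R : (Fin 2 → L) → Module.End ℝ E) :
    (p : ℕ) → (Fin (2 * p) → L) → Module.End ℝ E
  | 0 => fun _ => 1
  | (p + 1) => fun a => wedge R (wpow R p) (fun i => a (Fin.cast (by omega) i))

/-- The `k`-th wedge power of an `End ℝ E`-valued 1-form. -/
noncomputable def wpow1 {L E : Type*} [AddCommGroup E] [Module ℝ E]
    (θ : (Fin 1 → L) → Module.End ℝ E) :
    (k : ℕ) → (Fin k → L) → Module.End ℝ E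
  | 0 => fun _ => 1
  | (k + 1) => fun a => wedge θ (wpow1 θ k) (fun i => a (Fin.cast (by omega) i))

/-- The Chern character form `ch_p(∇) = Tr_*((R^∇)^{∧p})`. -/
noncomputable def chp {L E : Type*} (C : Type*) [LieRing L] [LieAlgebra ℝ L]
    [CommRing C] [AddCommGroup E] [Module ℝ E] [Module C E]
    (D : L →ₗ[ℝ] Module.End ℝ E) (p : ℕ) : (Fin (2 * p) → L) → C :=
  fun a => trR C (wpow (curv2 D) p a)

/-- `∫₀ˢ f(t) dt` for a function `f : ℝ → C` given by a polynomial with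
coefficients in the ℝ-algebra `C` (and `0` if `f` is not polynomial). -/
noncomputable def intPolyTo {C : Type*} [CommRing C] [Algebra ℝ C] (s : ℝ) (f : ℝ → C) : C :=
  letI := Classical.propDecidable
  if h : ∃ P : Polynomial C, ∀ t : ℝ, f t = Polynomial.eval (algebraMap ℝ C t) P then
    ∑ k ∈ Finset.range (h.choose.natDegree + 1),
      (s ^ (k + 1) / ((k : ℝ) + 1)) • h.choose.coeff k
  else 0

/-- The valuewise integral over the standard 2-simplex
`Δ² = {(t₁,t₂) : t₁ ≥ 0, t₂ ≥ 0, t₁ + t₂ ≤ 1}` of a `C`-valued polynomial function. -/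
noncomputable def intSimplex2 {C : Type*} [CommRing C] [Algebra ℝ C] (f : ℝ → ℝ → C) : C :=
  intPolyTo 1 (fun t1 => intPolyTo (1 - t1) (fun t2 => f t1 t2))

/-- The Chern–Simons transgression form for a pair of ℝ-linear connections:
`cs_p(∇⁰,∇¹) = p·∫₀¹ Tr_*(λ ∧ (R_t)^{∧(p−1)}) dt` where `λ = ∇¹ − ∇⁰` and
`R_t` is the curvature of `∇⁰ + t•λ`. -/
noncomputable def csPair {L E : Type*} (C : Type*) [LieRing L] [LieAlgebra ℝ L]
    [CommRing C] [Algebra ℝ C] [AddCommGroup E] [Module ℝ E] [Module C E]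
    (D0 D1 : L →ₗ[ℝ] Module.End ℝ E) (p : ℕ) : (Fin (2 * (p - 1) + 1) → L) → C :=
  fun a => (p : ℝ) • intPolyTo 1 (fun t =>
    trR C (wedge (fun v : Fin 1 → L => (D1 - D0) (v 0))
      (wpow (curv2 (D0 + t • (D1 - D0))) (p - 1))
      (fun i => a (Fin.cast (by omega) i))))

/-- The Chern–Simons transgression form for a triple of ℝ-linear connections:
`cs_p(∇⁰,∇¹,∇²) = −p(p−1)·∫_{Δ²} Tr_*(λ₁ ∧ λ₂ ∧ (R_{(t₁,t₂)})^{∧(p−2)}) dt₁dt₂`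
where `λᵢ = ∇ⁱ − ∇⁰` and `R_{(t₁,t₂)}` is the curvature of `∇⁰ + t₁•λ₁ + t₂•λ₂`. -/
noncomputable def csTriple {L E : Type*} (C : Type*) [LieRing L] [LieAlgebra ℝ L]
    [CommRing C] [Algebra ℝ C] [AddCommGroup E] [Module ℝ E] [Module C E]
    (D0 D1 D2 : L →ₗ[ℝ] Module.End ℝ E) (p : ℕ) : (Fin (2 * (p - 2) + 2) → L) → C :=
  fun a => (-((p : ℝ) * ((p : ℝ) - 1))) • intSimplex2 (fun t1 t2 =>
    trR C (wedge (fun v : Fin 1 → L => (D1 - D0) (v 0))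
      (wedge (fun v : Fin 1 → L => (D2 - D0) (v 0))
        (wpow (curv2 (D0 + t1 • (D1 - D0) + t2 • (D2 - D0))) (p - 2)))
      (fun i => a (Fin.cast (by omega) i))))

/-!
Let `λ = ∇¹ - ∇⁰` be the difference of two flat connections. The curvature of `∇⁰ + t λ` is
`(t² - t) λ ∧ λ`, so `cs_{q+1}(∇⁰, ∇¹)` is a real multiple of `Tr λ^{2q+1}`. Flatness also gives the
Maurer–Cartan equation for `λ`: with respect to the action `[∇⁰, ·]` of `L` on `End_C(E)`,
`dλ + λ ∧ λ = 0`. Hence `d Tr λ^{2q+1}` is a multiple of `Tr λ^{2q+2}`, which vanishes because the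
trace is invariant under cyclic rotation of its factors, while a rotation of an even number of
arguments is an odd permutation. Finally, nondegeneracy of `h` makes the adjoint of a flat
connection flat.
-/

section Antisymmetrization

open Equiv

variable {X V W : Type*} [AddCommGroup V] [AddCommGroup W] {m n : ℕ}

/-- Antisymmetrization of a `V`-valued function of `n` variables, without the factor `1 / n!`.
No multilinearity is required. -/
def altSum : ((Fin n → X) → V) →+ ((Fin n → X) → V) where
  toFun f a := ∑ τ : Perm (Fin n), (Perm.sign τ : ℤ) • f (a ∘ τ)
  map_zero' := by ext; simp
  map_add' f g := by ext; simp [Finset.sum_add_distrib]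

lemma altSum_apply (f : (Fin n → X) → V) (a : Fin n → X) :
    altSum f a = ∑ τ : Perm (Fin n), (Perm.sign τ : ℤ) • f (a ∘ τ) := rfl

lemma map_altSum (φ : V →+ W) (f : (Fin n → X) → V) (a : Fin n → X) :
    φ (altSum f a) = altSum (fun b => φ (f b)) a := by
  simp only [altSum_apply, map_sum, map_zsmul]

lemma altSum_comp_perm (f : (Fin n → X) → V) (σ : Perm (Fin n)) :
    altSum (fun b => f (b ∘ σ)) = (Perm.sign σ : ℤ) • altSum f := by
  funext a
  rw [Pi.smul_apply, altSum_apply, altSum_apply, Finset.smul_sum]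
  refine Fintype.sum_equiv (Equiv.mulRight σ) _ _ fun τ => ?_
  rw [Equiv.coe_mulRight, map_mul, Units.val_mul, smul_smul, mul_left_comm, ← Units.val_mul,
    Int.units_mul_self, Units.val_one, mul_one]
  rfl

lemma sum_perm_eq_sum_sum {c : Fin (n + 1) → Perm (Fin (n + 1))} (hc : ∀ i, c i 0 = i)
    (g : Perm (Fin (n + 1)) → V) :
    ∑ τ, g τ = ∑ i, ∑ σ : Perm (Fin n), g (c i * Perm.decomposeFin.symm (0, σ)) := by
  rw [← Fintype.sum_prod_type']
  refine (Function.Bijective.sum_comp (e := fun x : Fin (n + 1) × Perm (Fin n) =>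
    c x.1 * Perm.decomposeFin.symm (0, x.2)) ?_ g).symm
  rw [Fintype.bijective_iff_injective_and_card]
  refine ⟨?_, by simp [Fintype.card_perm, Nat.factorial_succ]⟩
  rintro ⟨i, σ⟩ ⟨j, σ'⟩ (h : c i * _ = c j * _)
  obtain rfl : i = j := by simpa [hc] using congrArg (fun e : Perm (Fin (n + 1)) => e 0) h
  simpa using Perm.decomposeFin.symm.injective (mul_left_cancel h)

lemma altSum_succ (f : (Fin (n + 1) → X) → V) (a : Fin (n + 1) → X) :
    altSum f a = ∑ i : Fin (n + 1), (-1 : ℤ) ^ (i : ℕ) •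
      altSum (fun b => f (Fin.cons (a i) b)) (fun k => a (i.succAbove k)) := by
  rw [altSum_apply, sum_perm_eq_sum_sum (c := fun i => i.cycleRange.symm) Fin.cycleRange_symm_zero]
  refine Finset.sum_congr rfl fun i _ => ?_
  rw [altSum_apply, Finset.smul_sum]
  refine Finset.sum_congr rfl fun σ _ => ?_
  have harg : a ∘ (i.cycleRange.symm * Perm.decomposeFin.symm (0, σ) : Perm (Fin (n + 1))) =
      Fin.cons (a i) ((fun k => a (i.succAbove k)) ∘ σ) := by
    funext k
    refine Fin.cases ?_ (fun k => ?_) k <;> simp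
  rw [harg, smul_smul]
  simp [Perm.sign_symm, Fin.sign_cycleRange]

lemma altSum_mul_altSum {A : Type*} [Ring A] (f : (Fin m → X) → A) (g : (Fin n → X) → A) :
    altSum (fun b : Fin (m + n) → X => altSum f (b ∘ Fin.castAdd n) * altSum g (b ∘ Fin.natAdd m)) =
      (m.factorial * n.factorial) •
        altSum fun b => f (b ∘ Fin.castAdd n) * g (b ∘ Fin.natAdd m) := by
  set fg : (Fin (m + n) → X) → A := fun b => f (b ∘ Fin.castAdd n) * g (b ∘ Fin.natAdd m) with hfg
  have hexpand : (fun b : Fin (m + n) → X =>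
      altSum f (b ∘ Fin.castAdd n) * altSum g (b ∘ Fin.natAdd m)) =
      ∑ σ : Perm (Fin m), ∑ σ' : Perm (Fin n), ((Perm.sign σ * Perm.sign σ' : ℤˣ) : ℤ) •
        fun b => fg (b ∘ finSumFinEquiv.permCongr (sumCongr σ σ')) := by
    funext b
    simp only [altSum_apply, Finset.sum_mul_sum, Finset.sum_apply, Pi.smul_apply]
    refine Finset.sum_congr rfl fun σ _ => Finset.sum_congr rfl fun σ' _ => ?_
    have hleft : (b ∘ finSumFinEquiv.permCongr (sumCongr σ σ')) ∘ Fin.castAdd n =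
        (b ∘ Fin.castAdd n) ∘ σ := by
      funext k
      simp [Equiv.permCongr_apply]
    have hright : (b ∘ finSumFinEquiv.permCongr (sumCongr σ σ')) ∘ Fin.natAdd m =
        (b ∘ Fin.natAdd m) ∘ σ' := by
      funext k
      simp [Equiv.permCongr_apply]
    simp only [hfg, hleft, hright, smul_mul_smul_comm, Units.val_mul]
  have hblock (σ : Perm (Fin m)) (σ' : Perm (Fin n)) :
      ((Perm.sign σ * Perm.sign σ' : ℤˣ) : ℤ) •
        altSum (fun b => fg (b ∘ finSumFinEquiv.permCongr (sumCongr σ σ'))) = altSum fg := by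
    rw [altSum_comp_perm, Perm.sign_permCongr, Perm.sign_sumCongr, smul_smul, ← Units.val_mul,
      Int.units_mul_self, Units.val_one, one_smul]
  simp only [hexpand, map_sum, map_zsmul, hblock]
  simp [Fintype.card_perm, mul_smul]

end Antisymmetrization

section Cyclic

open Equiv

variable {X V : Type*} [AddCommGroup V] {m n : ℕ}

lemma apply_comp_finCycle {Y : Type*} {f : (Fin (n + 1) → X) → Y}
    (hf : ∀ b, f (b ∘ finRotate (n + 1)) = f b) (k : Fin (n + 1)) (b : Fin (n + 1) → X) :
    f (b ∘ finCycle k) = f b := by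
  rw [finCycle_eq_finRotate_iterate]
  induction (k : ℕ) with
  | zero => rfl
  | succ j ih => rw [Function.iterate_succ, ← Function.comp_assoc, hf, ih]

lemma sign_finCycle (hm : Even m) (k : Fin (m + 1)) : Perm.sign (finCycle k) = 1 := by
  have hpow : finCycle k = finRotate (m + 1) ^ (k : ℕ) :=
    DFunLike.coe_injective (finCycle_eq_finRotate_iterate.trans (Perm.coe_pow _ _).symm)
  rw [hpow, map_pow, sign_finRotate, Nat.add_sub_cancel, hm.neg_one_pow, one_pow]

lemma two_nsmul_altSum_eq_zero_of_cyclic (hm : Even m) {f : (Fin (m + 2) → X) → V}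
    (hf : ∀ b, f (b ∘ finRotate (m + 2)) = f b) : 2 • altSum f = 0 := by
  have h := altSum_comp_perm f (finRotate (m + 2))
  rw [funext hf, sign_finRotate, Nat.add_succ_sub_one, hm.add_one.neg_one_pow] at h
  rw [two_nsmul]
  nth_rewrite 1 [h]
  simp

lemma altSum_eq_nsmul_of_cyclic (hm : Even m) {f : (Fin (m + 1) → X) → V}
    (hf : ∀ b, f (b ∘ finRotate (m + 1)) = f b) (a : Fin (m + 1) → X) :
    altSum f a = (m + 1) • altSum (fun b => f (Fin.cons (a 0) b)) (Fin.tail a) := by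
  have hterm (k : Fin (m + 1)) (σ : Perm (Fin m)) :
      (Perm.sign (finCycle k * Perm.decomposeFin.symm (0, σ))⁻¹ : ℤ) •
        f (a ∘ ⇑(finCycle k * Perm.decomposeFin.symm (0, σ))⁻¹) =
      (Perm.sign σ⁻¹ : ℤ) • f (Fin.cons (a 0) (Fin.tail a ∘ ⇑σ⁻¹)) := by
    have harg : a ∘ ⇑(finCycle k * Perm.decomposeFin.symm (0, σ))⁻¹ ∘ finCycle k =
        Fin.cons (a 0) (Fin.tail a ∘ ⇑σ⁻¹) := by
      funext x
      refine Fin.cases (congrArg a ?_) (fun x => congrArg a ?_) x <;>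
        simp [Equiv.symm_apply_eq]
    rw [← apply_comp_finCycle hf k, Function.comp_assoc, harg]
    simp [sign_finCycle hm]
  rw [altSum_apply, ← Fintype.sum_equiv (Equiv.inv _) _ _ fun _ => rfl,
    sum_perm_eq_sum_sum (c := finCycle) (by simp [finCycle])]
  simp only [Equiv.inv_apply, hterm, Finset.sum_const, Finset.card_univ, Fintype.card_fin]
  rw [altSum_apply, ← Fintype.sum_equiv (Equiv.inv _) _ _ fun _ => rfl]
  rfl

end Cyclic

section TraceForms

variable {X A C : Type*} [Ring A] [AddCommGroup C] {m n : ℕ}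

/-- The `n`-th wedge power `l ∧ ⋯ ∧ l` of a ring-valued `1`-form `l`. -/
def altPow (l : X → A) (n : ℕ) : (Fin n → X) → A :=
  altSum fun b => (List.ofFn (l ∘ b)).prod

lemma altPow_zero (l : X → A) (a : Fin 0 → X) : altPow l 0 a = 1 := by
  simp [altPow, altSum_apply]

lemma altPow_one (l : X → A) (a : Fin 1 → X) : altPow l 1 a = l (a 0) := by
  simp [altPow, altSum_apply]

lemma altPow_two (l : X → A) (a : Fin 2 → X) :
    altPow l 2 a = l (a 0) * l (a 1) - l (a 1) * l (a 0) := by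
  rw [altPow, altSum_succ]
  simp [altSum_apply, Fin.succAbove, sub_eq_add_neg]

lemma altPow_cast (l : X → A) (h : m = n) (a : Fin n → X) :
    altPow l m (fun i => a (Fin.cast h i)) = altPow l n a := by
  subst h
  rfl

lemma map_altPow {B : Type*} [Ring B] (φ : A →+* B) (l : X → A) (a : Fin n → X) :
    φ (altPow l n a) = altPow (φ ∘ l) n a := by
  refine (map_altSum φ.toAddMonoidHom _ a).trans ?_
  simp [altPow, map_list_prod, Function.comp_assoc]

/-- The form `2 Tr(μ ∧ l ∧ ⋯ ∧ l)`, with `m` factors `l`, as an additive function of `μ`. The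
factor `2` keeps it free of denominators, and `μ` need not be alternating. -/
def trMulAltPow (tr : A →+ C) (l : X → A) (m : ℕ) : (X → X → A) →+ ((Fin (m + 2) → X) → C) where
  toFun μ := altSum fun b =>
    tr (μ (b 0) (b 1) * (List.ofFn fun j : Fin m => l (b j.succ.succ)).prod)
  map_zero' := by
    simp only [Pi.zero_apply, zero_mul, map_zero]
    exact map_zero altSum
  map_add' μ ν := by
    simp only [Pi.add_apply, add_mul, map_add]
    exact map_add altSum _ _

lemma trMulAltPow_apply (tr : A →+ C) (l : X → A) (μ : X → X → A) :
    trMulAltPow tr l m μ =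
      altSum fun b => tr (μ (b 0) (b 1) * (List.ofFn fun j : Fin m => l (b j.succ.succ)).prod) :=
  rfl

lemma trMulAltPow_swap (tr : A →+ C) (l : X → A) (μ : X → X → A) :
    trMulAltPow tr l m (fun x y => μ y x) = -trMulAltPow tr l m μ := by
  have hfix (j : Fin m) : Equiv.swap (0 : Fin (m + 2)) 1 j.succ.succ = j.succ.succ :=
    Equiv.swap_apply_of_ne_of_ne (Fin.succ_ne_zero _) (Fin.succ_succ_ne_one j)
  have h := altSum_comp_perm (fun b : Fin (m + 2) → X =>
    tr (μ (b 0) (b 1) * (List.ofFn fun j : Fin m => l (b j.succ.succ)).prod)) (Equiv.swap 0 1)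
  simpa [trMulAltPow_apply, hfix, Equiv.Perm.sign_swap] using h

lemma tr_prod_ofFn_comp_finRotate {tr : A →+ C} (htr : ∀ x y, tr (x * y) = tr (y * x))
    (x : Fin (n + 1) → A) :
    tr (List.ofFn (x ∘ finRotate (n + 1))).prod = tr (List.ofFn x).prod := by
  rw [List.ofFn_succ (f := x), List.prod_cons, htr, List.ofFn_succ']
  simp

lemma two_nsmul_trMulAltPow_mul_eq_zero (hm : Even m) {tr : A →+ C}
    (htr : ∀ x y, tr (x * y) = tr (y * x)) (l : X → A) :
    2 • trMulAltPow tr l m (fun x y => l x * l y) = 0 := by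
  have h := two_nsmul_altSum_eq_zero_of_cyclic (X := X)
    (f := fun b => tr (List.ofFn (l ∘ b)).prod) hm fun b => tr_prod_ofFn_comp_finRotate htr (l ∘ b)
  simpa [trMulAltPow_apply, List.ofFn_succ, mul_assoc] using h

lemma tr_altPow_cons (hm : Even m) {tr : A →+ C} (htr : ∀ x y, tr (x * y) = tr (y * x))
    (l : X → A) (x : X) (a : Fin m → X) :
    tr (altPow l (m + 1) (Fin.cons x a)) =
      (m + 1) • altSum (fun b : Fin m → X => tr (l x * (List.ofFn (l ∘ b)).prod)) a := by
  rw [altPow, map_altSum,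
    altSum_eq_nsmul_of_cyclic hm fun b => tr_prod_ofFn_comp_finRotate htr (l ∘ b)]
  simp [List.ofFn_succ, Function.comp_def]

lemma altSum_tr_prod_ofFn_update (hm : Even m) {tr : A →+ C} (htr : ∀ x y, tr (x * y) = tr (y * x))
    (l : X → A) (μ : X → X → A) (k : Fin (m + 1)) :
    altSum (fun b : Fin (m + 2) → X => tr (List.ofFn
      (Function.update (l ∘ Fin.tail b) k (μ (b 0) (b k.succ)))).prod) = trMulAltPow tr l m μ := by
  set G : (Fin (m + 2) → X) → C := fun b =>
    tr (μ (b 0) (b 1) * (List.ofFn fun j : Fin m => l (b j.succ.succ)).prod) with hG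
  have hrotate (b : Fin (m + 2) → X) :
      tr (List.ofFn (Function.update (l ∘ Fin.tail b) k (μ (b 0) (b k.succ)))).prod =
        G (b ∘ Equiv.Perm.decomposeFin.symm (0, finCycle k)) := by
    rw [← apply_comp_finCycle (f := fun x : Fin (m + 1) → A => tr (List.ofFn x).prod)
      (tr_prod_ofFn_comp_finRotate htr) k, List.ofFn_succ, List.prod_cons, hG]
    have hzero : finCycle k 0 = k := by simp [finCycle]
    have hone : Equiv.Perm.decomposeFin.symm (0, finCycle k) 1 = k.succ := by
      rw [← Fin.succ_zero_eq_one, Equiv.Perm.decomposeFin_symm_apply_succ, hzero,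
        Equiv.swap_self, Equiv.refl_apply]
    simp [hzero, hone, Fin.tail]
  rw [funext hrotate, altSum_comp_perm, Equiv.Perm.decomposeFin.symm_sign]
  simp [sign_finCycle hm, trMulAltPow_apply, hG]

lemma map_prod_ofFn_of_leibniz {d : A →+ A} (hd : ∀ x y, d (x * y) = d x * y + x * d y)
    (x : Fin n → A) :
    d (List.ofFn x).prod = ∑ k, (List.ofFn (Function.update x k (d (x k)))).prod := by
  induction n with
  | zero => simpa using hd 1 1
  | succ n ih =>
    rw [List.ofFn_succ, List.prod_cons, hd, ih, Fin.sum_univ_succ, Finset.mul_sum]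
    congr 1
    · simp [List.ofFn_succ]
    · refine Finset.sum_congr rfl fun k _ => ?_
      have htail := Function.update_comp_eq_of_injective x (Fin.succ_injective n) k (d (x k.succ))
      simp only [List.ofFn_succ (f := Function.update x _ _), List.prod_cons,
        Function.update_of_ne (Fin.succ_ne_zero k).symm]
      exact congrArg (fun y => x 0 * (List.ofFn y).prod) htail.symm

lemma sum_act_tr_altPow_succAbove (hm : Even m) {tr : A →+ C}
    (htr : ∀ x y, tr (x * y) = tr (y * x)) {δ : X → A →+ A}
    (hδ : ∀ z x y, δ z (x * y) = δ z x * y + x * δ z y) {act : X → C → C}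
    (hact : ∀ z x, act z (tr x) = tr (δ z x)) (l : X → A) (a : Fin (m + 2) → X) :
    ∑ i : Fin (m + 2), (-1 : ℤ) ^ (i : ℕ) •
      act (a i) (tr (altPow l (m + 1) fun k => a (i.succAbove k))) =
        (m + 1) • trMulAltPow tr l m (fun x y => δ x (l y)) a := by
  have hsum : ∑ k : Fin (m + 1), altSum (fun b : Fin (m + 2) → X => tr (List.ofFn
      (Function.update (l ∘ Fin.tail b) k (δ (b 0) (l (b k.succ))))).prod) a =
      (m + 1) • trMulAltPow tr l m (fun x y => δ x (l y)) a := by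
    rw [Finset.sum_congr rfl fun k _ =>
      congrFun (altSum_tr_prod_ofFn_update hm htr l (fun x y => δ x (l y)) k) a]
    simp
  rw [← hsum, ← Finset.sum_apply, ← map_sum, altSum_succ]
  refine Finset.sum_congr rfl fun i _ => ?_
  rw [hact, altPow, map_altSum (δ (a i)), map_altSum tr]
  congr 1
  refine congrArg (fun f => altSum f _) (funext fun b => ?_)
  rw [map_prod_ofFn_of_leibniz (hδ (a i)), map_sum, Finset.sum_apply]
  rfl

end TraceForms

section Differential

variable {L V : Type*} [LieRing L] [AddCommGroup V] {m : ℕ}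

/-- The `(i, j)` summand of the bracket part of `dGen`, extended by `0` to `j ≤ i`. -/
def bracketTerm (ω : (Fin (m + 1) → L) → V) (a : Fin (m + 2) → L) (i j : Fin (m + 2)) : V :=
  if h : (i : ℕ) < (j : ℕ) then
    (-1 : ℤ) ^ ((i : ℕ) + (j : ℕ)) • ω (Fin.cons ⁅a i, a j⁆
      (fun k : Fin m => a (j.succAbove
        ((⟨(i : ℕ), by have := j.isLt; omega⟩ : Fin (m + 1)).succAbove k))))
  else 0

lemma dGen_succ (act : L → V → V) (ω : (Fin (m + 1) → L) → V) (a : Fin (m + 2) → L) :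
    dGen act ω a =
      (∑ i : Fin (m + 2), (-1 : ℤ) ^ (i : ℕ) • act (a i) (ω fun k => a (i.succAbove k))) +
      ∑ i, ∑ j, bracketTerm ω a i j := rfl

lemma bracketTerm_self (ω : (Fin (m + 1) → L) → V) (a : Fin (m + 2) → L) (i : Fin (m + 2)) :
    bracketTerm ω a i i = 0 := dif_neg (lt_irrefl _)

lemma bracketTerm_succAbove_add_swap {ω : (Fin (m + 1) → L) → V}
    (hω : ∀ x c, ω (Fin.cons (-x) c) = -ω (Fin.cons x c)) (a : Fin (m + 2) → L)
    (i : Fin (m + 2)) (j : Fin (m + 1)) :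
    bracketTerm ω a i (i.succAbove j) + bracketTerm ω a (i.succAbove j) i =
      -((-1 : ℤ) ^ (i : ℕ) • (-1 : ℤ) ^ (j : ℕ) •
        ω (Fin.cons ⁅a i, a (i.succAbove j)⁆ fun k => a (i.succAbove (j.succAbove k)))) := by
  rcases lt_or_ge (j : ℕ) (i : ℕ) with h | h
  · have hs : i.succAbove j = j.castSucc := Fin.succAbove_of_castSucc_lt _ _ h
    simp only [bracketTerm, hs, Fin.val_castSucc]
    rw [dif_neg h.not_gt, dif_pos h, zero_add, ← lie_skew, hω, smul_neg, pow_add, smul_smul,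
      mul_comm]
  · have hs : i.succAbove j = j.succ := Fin.succAbove_of_le_castSucc _ _ h
    have hpred : j.predAbove i = ⟨i, by omega⟩ := by
      rw [Fin.predAbove_of_le_castSucc _ _ h]
      rfl
    have hface (k : Fin m) : j.succ.succAbove (Fin.succAbove ⟨i, by omega⟩ k) =
        i.succAbove (j.succAbove k) := by
      rw [← Fin.succAbove_succAbove_succAbove_predAbove i j k, hs, hpred]
    simp only [bracketTerm, hs, Fin.val_succ, hface]
    rw [dif_pos (by omega), dif_neg (by omega), add_zero, smul_smul, ← neg_smul]
    congr 1
    ring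

lemma two_nsmul_sum_bracketTerm {ω : (Fin (m + 1) → L) → V}
    (hω : ∀ x c, ω (Fin.cons (-x) c) = -ω (Fin.cons x c)) (a : Fin (m + 2) → L) :
    2 • ∑ i, ∑ j, bracketTerm ω a i j =
      -∑ i : Fin (m + 2), (-1 : ℤ) ^ (i : ℕ) • ∑ j : Fin (m + 1), (-1 : ℤ) ^ (j : ℕ) •
        ω (Fin.cons ⁅a i, a (i.succAbove j)⁆ fun k => a (i.succAbove (j.succAbove k))) := by
  calc 2 • ∑ i, ∑ j, bracketTerm ω a i j
      = ∑ i, ∑ j, (bracketTerm ω a i j + bracketTerm ω a j i) := by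
        simp only [Finset.sum_add_distrib]
        rw [Finset.sum_comm (f := fun i j => bracketTerm ω a j i), two_nsmul]
    _ = _ := by
        rw [← Finset.sum_neg_distrib]
        refine Finset.sum_congr rfl fun i _ => ?_
        simp only [Fin.sum_univ_succAbove _ i, bracketTerm_self, zero_add,
          bracketTerm_succAbove_add_swap hω, Finset.smul_sum, Finset.sum_neg_distrib]

variable {A : Type*} [Ring A]

lemma two_nsmul_sum_bracketTerm_tr_altPow (hm : Even m) {tr : A →+ V}
    (htr : ∀ x y, tr (x * y) = tr (y * x)) (l : L →+ A) (a : Fin (m + 2) → L) :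
    2 • ∑ i, ∑ j, bracketTerm (fun v => tr (altPow l (m + 1) v)) a i j =
      -((m + 1) • trMulAltPow tr l m (fun x y => l ⁅x, y⁆) a) := by
  have hneg (x : L) (c : Fin m → L) : tr (altPow l (m + 1) (Fin.cons (-x) c)) =
      -tr (altPow l (m + 1) (Fin.cons x c)) := by
    rw [tr_altPow_cons hm htr, tr_altPow_cons hm htr, ← smul_neg, ← Pi.neg_apply, ← map_neg]
    congr 1
    refine congrArg (fun f => altSum f c) (funext fun b => ?_)
    simp
  rw [two_nsmul_sum_bracketTerm hneg, trMulAltPow_apply, altSum_succ, Finset.smul_sum]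
  congr 1
  refine Finset.sum_congr rfl fun i _ => ?_
  rw [altSum_succ, smul_comm, Finset.smul_sum (r := m + 1)]
  congr 1
  refine Finset.sum_congr rfl fun j _ => ?_
  rw [tr_altPow_cons hm htr, smul_comm]
  rfl

lemma two_nsmul_dGen_tr_altPow_eq_zero (hm : Even m) {tr : A →+ V}
    (htr : ∀ x y, tr (x * y) = tr (y * x)) {δ : L → A →+ A}
    (hδ : ∀ a x y, δ a (x * y) = δ a x * y + x * δ a y) {act : L → V → V}
    (hact : ∀ a x, act a (tr x) = tr (δ a x)) {l : L →+ A}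
    (hl : ∀ a b, l ⁅a, b⁆ = δ a (l b) - δ b (l a) + (l a * l b - l b * l a)) :
    2 • dGen act (fun v => tr (altPow l (m + 1) v)) = 0 := by
  have hmc : trMulAltPow tr l m (fun x y => l ⁅x, y⁆) =
      2 • trMulAltPow tr l m fun x y => δ x (l y) := by
    have hsplit : (fun x y => l ⁅x, y⁆) = ((fun x y => δ x (l y)) - fun x y => δ y (l x)) +
        ((fun x y => l x * l y) - fun x y => l y * l x) := by
      funext x y
      exact hl x y
    rw [hsplit, map_add, map_sub, map_sub, trMulAltPow_swap tr l fun x y => δ x (l y),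
      trMulAltPow_swap tr l fun x y => l x * l y, sub_neg_eq_add, sub_neg_eq_add, ← two_nsmul,
      ← two_nsmul, two_nsmul_trMulAltPow_mul_eq_zero hm htr, add_zero]
  funext a
  rw [Pi.smul_apply, dGen_succ, smul_add, sum_act_tr_altPow_succAbove hm htr hδ hact,
    two_nsmul_sum_bracketTerm_tr_altPow hm htr, hmc, Pi.smul_apply, smul_comm, add_neg_cancel]
  rfl

end Differential

section Wedge

variable {L E : Type*} [AddCommGroup E] [Module ℝ E] {m n : ℕ}

lemma wedge_smul_smul (r s : ℝ) (ω : (Fin m → L) → Module.End ℝ E)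
    (η : (Fin n → L) → Module.End ℝ E) : wedge (r • ω) (s • η) = (r * s) • wedge ω η := by
  funext a
  simp only [wedge, Pi.smul_apply, smul_mul_smul_comm, smul_comm _ (r * s), ← Finset.smul_sum]

lemma wedge_altPow (l : L → Module.End ℝ E) (m n : ℕ) :
    wedge (altPow l m) (altPow l n) = altPow l (m + n) := by
  have hwedge : wedge (altPow l m) (altPow l n) = (m.factorial * n.factorial : ℝ)⁻¹ •
      altSum fun b : Fin (m + n) → L =>
        altPow l m (b ∘ Fin.castAdd n) * altPow l n (b ∘ Fin.natAdd m) := rfl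
  have hprod (b : Fin (m + n) → L) : (List.ofFn (l ∘ b ∘ Fin.castAdd n)).prod *
      (List.ofFn (l ∘ b ∘ Fin.natAdd m)).prod = (List.ofFn (l ∘ b)).prod := by
    rw [← List.prod_append, List.ofFn_add]
    rfl
  rw [hwedge, altPow, altPow, altSum_mul_altSum, ← Nat.cast_smul_eq_nsmul ℝ, smul_smul,
    Nat.cast_mul, inv_mul_cancel₀ (by positivity), one_smul]
  simp only [hprod]
  rfl

lemma wpow_smul_altPow_two (l : L → Module.End ℝ E) (s : ℝ) (q : ℕ) :
    wpow (s • altPow l 2) q = s ^ q • altPow l (2 * q) := by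
  induction q with
  | zero =>
    funext a
    simp [wpow, altPow_zero]
  | succ q ih =>
    funext a
    rw [wpow, ih, wedge_smul_smul, wedge_altPow, Pi.smul_apply, pow_succ']
    exact congrArg ((s * s ^ q) • ·) (altPow_cast l (by omega) a)

end Wedge

section PolynomialIntegral

open Polynomial

-- Linear forms `A → k` reduce the claim to polynomials over the infinite field `k`.
lemma polynomial_eq_zero_of_eval_algebraMap_eq_zero {k A : Type*} [Field k] [Infinite k] [Ring A]
    [Algebra k A] {P : A[X]} (hP : ∀ t : k, P.eval (algebraMap k A t) = 0) : P = 0 := by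
  ext n
  rw [coeff_zero, ← Module.forall_dual_apply_eq_zero_iff k]
  intro φ
  set r : k[X] := ∑ i ∈ P.support, monomial i (φ (P.coeff i)) with hr
  have hr0 : r = 0 := by
    refine Polynomial.funext fun t => ?_
    rw [eval_zero, ← map_zero φ, ← hP t, hr, eval_finsetSum, eval_eq_sum, Polynomial.sum_def,
      map_sum]
    refine Finset.sum_congr rfl fun i _ => ?_
    rw [eval_monomial, ← map_pow, ← Algebra.commutes, ← Algebra.smul_def, map_smul, smul_eq_mul,
      mul_comm]
  have hcoeff : r.coeff n = φ (P.coeff n) := by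
    simp +contextual [hr, finsetSum_coeff, coeff_monomial]
  rw [← hcoeff, hr0, coeff_zero]

variable {C : Type*} [CommRing C] [Algebra ℝ C]

lemma intPolyTo_eval (s : ℝ) (P : C[X]) : intPolyTo s (fun t => P.eval (algebraMap ℝ C t)) =
    P.sum fun k c => (s ^ (k + 1) / ((k : ℝ) + 1)) • c := by
  have hex : ∃ Q : C[X], ∀ t : ℝ, P.eval (algebraMap ℝ C t) = Q.eval (algebraMap ℝ C t) :=
    ⟨P, fun _ => rfl⟩
  have hchoose : hex.choose = P := sub_eq_zero.mp <|
    polynomial_eq_zero_of_eval_algebraMap_eq_zero fun t : ℝ => by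
      rw [eval_sub, ← hex.choose_spec t, sub_self]
  rw [intPolyTo, dif_pos hex, hchoose, sum_over_range _ fun _ => smul_zero _]

lemma integral_eval_eq_sum (s : ℝ) (r : ℝ[X]) :
    ∫ t in (0 : ℝ)..s, r.eval t = r.sum fun k c => s ^ (k + 1) / ((k : ℝ) + 1) * c := by
  simp only [eval_eq_sum, Polynomial.sum_def]
  rw [intervalIntegral.integral_finsetSum fun k _ =>
    Continuous.intervalIntegrable (by fun_prop) _ _]
  refine Finset.sum_congr rfl fun k _ => ?_
  rw [intervalIntegral.integral_const_mul, integral_pow]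
  simp [mul_comm]

lemma intPolyTo_eval_smul (s : ℝ) (r : ℝ[X]) (c : C) :
    intPolyTo s (fun t => r.eval t • c) = (∫ t in (0 : ℝ)..s, r.eval t) • c := by
  have heval : (fun t : ℝ => r.eval t • c) =
      fun t => (r.map (algebraMap ℝ C) * Polynomial.C c).eval (algebraMap ℝ C t) := by
    funext t
    rw [eval_mul, eval_C, eval_map, Algebra.smul_def, eval₂_at_apply]
  have hdeg : (r.map (algebraMap ℝ C) * Polynomial.C c).natDegree < r.natDegree + 1 :=
    Nat.lt_succ_of_le ((natDegree_mul_C_le _ _).trans natDegree_map_le)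
  rw [heval, intPolyTo_eval, integral_eval_eq_sum, sum_over_range' _ (fun _ => smul_zero _) _ hdeg,
    sum_over_range _ fun _ => mul_zero _, Finset.sum_smul]
  refine Finset.sum_congr rfl fun k _ => ?_
  rw [coeff_mul_C, coeff_map, ← Algebra.smul_def, smul_smul]

end PolynomialIntegral

section Connections

variable {L C E : Type*} [LieRing L] [LieAlgebra ℝ L] [CommRing C] [Algebra ℝ C]
  [AddCommGroup E] [Module ℝ E] [Module C E] {ρ : L →ₗ[ℝ] Derivation ℝ C C}

section Adjoint

variable {F : Type*} [AddCommGroup F] [Module ℝ F] [Module C F] {B : E →ₗ[C] F →ₗ[C] C}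
  {D : L →ₗ[ℝ] Module.End ℝ E} {D' : L →ₗ[ℝ] Module.End ℝ F}

lemma curv_add_curv_of_adjoint (hρ : ∀ (a b : L) (f : C), ρ ⁅a, b⁆ f = ρ a (ρ b f) - ρ b (ρ a f))
    (hadj : ∀ (a : L) (s : E) (t : F), ρ a (B s t) = B (D a s) t + B s (D' a t))
    (a b : L) (s : E) (t : F) : B (curv D a b s) t + B s (curv D' a b t) = 0 := by
  have h := hρ a b (B s t)
  simp only [hadj, map_add] at h
  simp only [curv, LinearMap.sub_apply, Module.End.mul_apply, map_sub]
  linear_combination -h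

lemma curv_eq_zero_of_adjoint
    (hρ : ∀ (a b : L) (f : C), ρ ⁅a, b⁆ f = ρ a (ρ b f) - ρ b (ρ a f)) (hB : B.SeparatingRight)
    (hadj : ∀ (a : L) (s : E) (t : F), ρ a (B s t) = B (D a s) t + B s (D' a t))
    (hD : ∀ a b, curv D a b = 0) (a b : L) : curv D' a b = 0 := by
  ext t
  refine hB _ fun s => ?_
  simpa [hD a b] using curv_add_curv_of_adjoint hρ hadj a b s t

end Adjoint

lemma curv_segment (D₀ D₁ : L →ₗ[ℝ] Module.End ℝ E) (t : ℝ) (a b : L) :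
    curv (D₀ + t • (D₁ - D₀)) a b = (1 - t) • curv D₀ a b + t • curv D₁ a b +
      (t ^ 2 - t) • ((D₁ - D₀) a * (D₁ - D₀) b - (D₁ - D₀) b * (D₁ - D₀) a) := by
  simp only [curv, LinearMap.add_apply, LinearMap.smul_apply, LinearMap.sub_apply, add_mul, mul_add,
    sub_mul, mul_sub, smul_mul_assoc, mul_smul_comm]
  module

lemma curv2_segment_of_flat {D₀ D₁ : L →ₗ[ℝ] Module.End ℝ E} (h₀ : ∀ a b, curv D₀ a b = 0)
    (h₁ : ∀ a b, curv D₁ a b = 0) (t : ℝ) :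
    curv2 (D₀ + t • (D₁ - D₀)) = (t ^ 2 - t) • altPow (D₁ - D₀) 2 := by
  funext v
  rw [curv2, curv_segment, h₀, h₁, smul_zero, smul_zero, zero_add, zero_add, Pi.smul_apply,
    altPow_two]

lemma dRho_smul (r : ℝ) {n : ℕ} (ω : (Fin n → L) → C) : dRho ρ (r • ω) = r • dRho ρ ω := by
  funext a
  cases n <;> simp [dRho, dGen, Finset.smul_sum, smul_comm _ r, smul_dite, Derivation.map_smul]

/-- The difference `∇¹ - ∇⁰` of two connections as an `End_C(E)`-valued `1`-form. -/
def connDiff {D₀ D₁ : L →ₗ[ℝ] Module.End ℝ E} (h₀ : IsConn ρ D₀) (h₁ : IsConn ρ D₁) :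
    L →+ Module.End C E where
  toFun a :=
    { toFun := (D₁ - D₀) a
      map_add' := map_add _
      map_smul' := fun f e => by
        simp only [LinearMap.sub_apply, h₀ a f e, h₁ a f e, RingHom.id_apply, smul_sub]
        abel }
  map_zero' := by ext e; simp
  map_add' a b := by
    ext e
    exact LinearMap.congr_fun (map_add (D₁ - D₀) a b) e

section Commutator

lemma repr_apply_of_leibniz {T : Module.End ℝ E} {d : Derivation ℝ C C}
    (hT : ∀ (f : C) (e : E), T (f • e) = f • T e + d f • e) {ι : Type*} [Finite ι]
    (b : Module.Basis ι C E) (v : E) (i : ι) :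
    b.repr (T v) i = d (b.repr v i) + b.repr (b.constr C (T ∘ b) v) i := by
  cases nonempty_fintype ι
  have hTv : T v = ∑ j, d (b.repr v j) • b j + b.constr C (T ∘ b) v := by
    conv_lhs => rw [← b.sum_repr v]
    simp only [map_sum, hT, Finset.sum_add_distrib, b.constr_apply_fintype C, Function.comp_apply,
      b.equivFun_apply]
    rw [add_comm]
  rw [hTv, map_add, Finsupp.add_apply, b.repr_sum_self]

/-- The commutator `φ ↦ [T, φ]` on `End_C(E)`, where `T` is a derivation of `E` over `d`. It is
the action of `∇_a` on endomorphisms when `T = ∇_a` and `d = ρ(a)`. -/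
def endCommutator {T : Module.End ℝ E} {d : Derivation ℝ C C}
    (hT : ∀ (f : C) (e : E), T (f • e) = f • T e + d f • e) :
    Module.End C E →+ Module.End C E where
  toFun φ :=
    { toFun := fun e => T (φ e) - φ (T e)
      map_add' := fun x y => by simp only [map_add]; abel
      map_smul' := fun f e => by
        simp only [map_smul, hT, map_add, RingHom.id_apply, smul_sub]
        abel }
  map_zero' := by ext e; simp
  map_add' φ ψ := by
    ext e
    simp only [LinearMap.add_apply, map_add, LinearMap.coe_mk, AddHom.coe_mk]
    abel

variable {T : Module.End ℝ E} {d : Derivation ℝ C C}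
  (hT : ∀ (f : C) (e : E), T (f • e) = f • T e + d f • e)

lemma endCommutator_mul (φ ψ : Module.End C E) :
    endCommutator hT (φ * ψ) = endCommutator hT φ * ψ + φ * endCommutator hT ψ := by
  ext e
  change T (φ (ψ e)) - φ (ψ (T e)) = T (φ (ψ e)) - φ (T (ψ e)) + φ (T (ψ e) - ψ (T e))
  rw [map_sub, sub_add_sub_cancel]

lemma trace_endCommutator [Module.Finite C E] [Module.Free C E] (φ : Module.End C E) :
    LinearMap.trace C E (endCommutator hT φ) = d (LinearMap.trace C E φ) := by
  classical
  let b := Module.Free.chooseBasis C E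
  set Γ : Module.End C E := b.constr C (T ∘ b)
  have htrace (ψ : Module.End C E) : LinearMap.trace C E ψ = ∑ i, b.repr (ψ (b i)) i := by
    simp [LinearMap.trace_eq_matrix_trace C b, Matrix.trace, LinearMap.toMatrix_apply]
  have hentry (i) : b.repr (endCommutator hT φ (b i)) i = d (b.repr (φ (b i)) i) +
      (b.repr ((Γ * φ) (b i)) i - b.repr ((φ * Γ) (b i)) i) := by
    have hΓ : Γ (b i) = T (b i) := b.constr_basis C _ i
    change b.repr (T (φ (b i)) - φ (T (b i))) i = _
    rw [map_sub, Finsupp.sub_apply, repr_apply_of_leibniz hT, Module.End.mul_apply,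
      Module.End.mul_apply, hΓ, add_sub_assoc]
  simp only [htrace (endCommutator hT φ), hentry, Finset.sum_add_distrib, Finset.sum_sub_distrib]
  rw [← htrace, ← htrace, LinearMap.trace_mul_comm, sub_self, add_zero, htrace φ, map_sum]

end Commutator

variable [IsScalarTower ℝ C E]

/-- Restriction of scalars `End_C(E) → End_ℝ(E)` as a ring homomorphism. -/
def endRestrictScalars (C E : Type*) [CommRing C] [Algebra ℝ C] [AddCommGroup E] [Module ℝ E]
    [Module C E] [IsScalarTower ℝ C E] : Module.End C E →+* Module.End ℝ E where
  toFun φ := φ.restrictScalars ℝ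
  map_one' := rfl
  map_mul' _ _ := rfl
  map_zero' := rfl
  map_add' _ _ := rfl

lemma endRestrictScalars_injective : Function.Injective (endRestrictScalars C E) :=
  LinearMap.restrictScalars_injective ℝ

lemma trR_endRestrictScalars (φ : Module.End C E) :
    trR C (endRestrictScalars C E φ) = LinearMap.trace C E φ := by
  have hex : ∃ ψ : E →ₗ[C] E, ⇑ψ = ⇑(endRestrictScalars C E φ) := ⟨φ, rfl⟩
  have hchoose : hex.choose = φ := DFunLike.coe_injective hex.choose_spec
  rw [trR, dif_pos hex, hchoose]

lemma trR_smul_endRestrictScalars (r : ℝ) (φ : Module.End C E) :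
    trR C (r • endRestrictScalars C E φ) = r • LinearMap.trace C E φ := by
  have hsmul : r • endRestrictScalars C E φ = endRestrictScalars C E (algebraMap ℝ C r • φ) := by
    ext e
    exact (algebraMap_smul C r (φ e)).symm
  rw [hsmul, trR_endRestrictScalars, map_smul, algebraMap_smul]

lemma endRestrictScalars_connDiff {D₀ D₁ : L →ₗ[ℝ] Module.End ℝ E} (h₀ : IsConn ρ D₀)
    (h₁ : IsConn ρ D₁) (a : L) :
    endRestrictScalars C E (connDiff h₀ h₁ a) = (D₁ - D₀) a := rfl

lemma endRestrictScalars_endCommutator {T : Module.End ℝ E} {d : Derivation ℝ C C}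
    (hT : ∀ (f : C) (e : E), T (f • e) = f • T e + d f • e) (φ : Module.End C E) :
    endRestrictScalars C E (endCommutator hT φ) =
      T * endRestrictScalars C E φ - endRestrictScalars C E φ * T := rfl

section FlatPair

variable {D₀ D₁ : L →ₗ[ℝ] Module.End ℝ E} (hD₀ : IsConn ρ D₀) (hD₁ : IsConn ρ D₁)

lemma connDiff_lie_of_flat (h₀ : ∀ a b, curv D₀ a b = 0) (h₁ : ∀ a b, curv D₁ a b = 0) (a b : L) :
    connDiff hD₀ hD₁ ⁅a, b⁆ =
      endCommutator (hD₀ a) (connDiff hD₀ hD₁ b) - endCommutator (hD₀ b) (connDiff hD₀ hD₁ a) +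
      (connDiff hD₀ hD₁ a * connDiff hD₀ hD₁ b - connDiff hD₀ hD₁ b * connDiff hD₀ hD₁ a) := by
  apply endRestrictScalars_injective
  simp only [map_add, map_sub, map_mul, endRestrictScalars_endCommutator,
    endRestrictScalars_connDiff, LinearMap.sub_apply]
  rw [← sub_eq_zero.mp (h₀ a b), ← sub_eq_zero.mp (h₁ a b)]
  noncomm_ring

lemma csPair_succ_of_flat (h₀ : ∀ a b, curv D₀ a b = 0) (h₁ : ∀ a b, curv D₁ a b = 0) (q : ℕ) :
    csPair C D₀ D₁ (q + 1) = (((q + 1 : ℕ) : ℝ) * ∫ t in (0 : ℝ)..1, (t ^ 2 - t) ^ q) •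
      fun a => LinearMap.trace C E (altPow (connDiff hD₀ hD₁) (2 * q + 1) a) := by
  funext (a : Fin (2 * q + 1) → L)
  set c := LinearMap.trace C E (altPow (connDiff hD₀ hD₁) (2 * q + 1) a) with hc
  set r : Polynomial ℝ := (Polynomial.X ^ 2 - Polynomial.X) ^ q with hr
  have heval (t : ℝ) : r.eval t = (t ^ 2 - t) ^ q := by simp [hr]
  have hone : (fun v : Fin 1 → L => (D₁ - D₀) (v 0)) = (1 : ℝ) • altPow (D₁ - D₀) 1 := by
    funext v
    rw [Pi.smul_apply, one_smul, altPow_one]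
  have hrestrict : altPow (D₁ - D₀) (2 * q + 1) a =
      endRestrictScalars C E (altPow (connDiff hD₀ hD₁) (2 * q + 1) a) :=
    (map_altPow (endRestrictScalars C E) (connDiff hD₀ hD₁) a).symm
  have hintegrand (t : ℝ) : trR C (wedge (fun v : Fin 1 → L => (D₁ - D₀) (v 0))
      (wpow (curv2 (D₀ + t • (D₁ - D₀))) q) fun i => a (Fin.cast (by omega) i)) =
      r.eval t • c := by
    rw [hone, curv2_segment_of_flat h₀ h₁, wpow_smul_altPow_two, wedge_smul_smul, wedge_altPow,
      one_mul, Pi.smul_apply, altPow_cast, hrestrict, trR_smul_endRestrictScalars, heval]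
  calc csPair C D₀ D₁ (q + 1) a
      = ((q + 1 : ℕ) : ℝ) • intPolyTo 1 fun t => r.eval t • c :=
        congrArg (fun f => ((q + 1 : ℕ) : ℝ) • intPolyTo 1 f) (funext hintegrand)
    _ = _ := by
        rw [intPolyTo_eval_smul, smul_smul, Pi.smul_apply]
        simp only [heval, hc]

variable [Module.Finite C E] [Module.Free C E]

lemma dRho_trace_altPow_connDiff_eq_zero (h₀ : ∀ a b, curv D₀ a b = 0) (h₁ : ∀ a b, curv D₁ a b = 0)
    {m : ℕ} (hm : Even m) :
    dRho ρ (fun a => LinearMap.trace C E (altPow (connDiff hD₀ hD₁) (m + 1) a)) = 0 := by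
  have h := two_nsmul_dGen_tr_altPow_eq_zero hm (tr := (LinearMap.trace C E).toAddMonoidHom)
    (LinearMap.trace_mul_comm C) (fun a => endCommutator_mul (hD₀ a)) (act := fun a c => ρ a c)
    (fun a φ => (trace_endCommutator (hD₀ a) φ).symm) (connDiff_lie_of_flat hD₀ hD₁ h₀ h₁)
  rw [← Nat.cast_smul_eq_nsmul ℝ] at h
  exact (smul_eq_zero_iff_right (by norm_num)).mp h

end FlatPair

end Connections

theorem stmt14_general {L C E : Type*} [LieRing L] [LieAlgebra ℝ L] [CommRing C] [Algebra ℝ C]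
    [AddCommGroup E] [Module ℝ E] [Module C E] [IsScalarTower ℝ C E]
    [Module.Finite C E] [Module.Free C E] (ρ : L →ₗ[ℝ] Derivation ℝ C C)
    (D₀ D₁ : L →ₗ[ℝ] Module.End ℝ E) (hD₀ : IsConn ρ D₀) (hD₁ : IsConn ρ D₁)
    (hflat₀ : ∀ a b : L, curv D₀ a b = 0) (hflat₁ : ∀ a b : L, curv D₁ a b = 0)
    (p : ℕ) (hp : 1 ≤ p) : dRho ρ (csPair C D₀ D₁ p) = 0 := by
  obtain ⟨q, rfl⟩ := Nat.exists_eq_add_of_le' hp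
  rw [csPair_succ_of_flat hD₀ hD₁ hflat₀ hflat₁]
  refine (dRho_smul _ _).trans ?_
  rw [dRho_trace_altPow_connDiff_eq_zero hD₀ hD₁ hflat₀ hflat₁ (even_two_mul q), smul_zero]

/-- for a flat ℝ-linear connection `∇` the Chern–Simons form
`cs_p(∇, ∇^h)` is closed. -/
theorem stmt14 {L : Type*} {C : Type*} {E : Type*}
    [LieRing L] [LieAlgebra ℝ L] [CommRing C] [Algebra ℝ C] [Module C L]
    [AddCommGroup E] [Module ℝ E] [Module C E] [IsScalarTower ℝ C E]
    [Module.Finite C E] [Module.Free C E]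
    (ρ : L →ₗ[ℝ] Derivation ℝ C C)
    (hρ : ∀ (a b : L) (f : C), ρ ⁅a, b⁆ f = ρ a (ρ b f) - ρ b (ρ a f))
    (hLeib : ∀ (a b : L) (f : C), ⁅a, f • b⁆ = f • ⁅a, b⁆ + ρ a f • b)
    (h : E →ₗ[C] E →ₗ[C] C) (hsymm : ∀ s t : E, h s t = h t s)
    (hnd : Function.Bijective (⇑h))
    (D Dh : L →ₗ[ℝ] Module.End ℝ E) (hD : IsConn ρ D) (hDh : IsConn ρ Dh)
    (hadj : ∀ (a : L) (s t : E), ρ a (h s t) = h (D a s) t + h s (Dh a t))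
    (hflat : ∀ a b : L, curv D a b = 0)
    (p : ℕ) (hp : 1 ≤ p) :
    dRho ρ (csPair C D Dh p) = 0 := by
  have hB : h.SeparatingRight := fun t ht => hnd.1 <| LinearMap.ext fun s => by
    rw [hsymm, ht, map_zero, LinearMap.zero_apply]
  exact stmt14_general ρ D Dh hD hDh hflat (curv_eq_zero_of_adjoint hρ hB hadj hflat) p hp
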